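/- Let H := L²(𝕋) (real), where 𝕋 is the one-dimensional torus, regarded as a Banach lattice with the natural (pointwise a.e.) order and identified with its dual. There exists a continuous function k: [0,1]² → ℒ(H) such that k(x, y) is a regular operator (a difference of two positive operators) for every (x, y) ∈ [0,1]², yet the kernel operator T_k: L¹((0,1); H) → L^∞_{σ*}((0,1); H), determined by ⟨(T_k f)(y), v⟩ = ∫₀¹ ⟨k(x, y) f(x), v⟩ dx for a.e. y and all v ∈ H, is not a regular operator. (Such k can be chosen of the form k(x, y) = f(x) where f: [0,1] → ℒ(H) is continuous, takes values in the regular operators, and ‖f(x)‖_r → ∞ as x → 0; this uses that the regular operators are not closed in ℒ(H) and hence there exist regular S_n with ‖S_n‖ → 0 and ‖S_n‖_r → ∞.) -/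

import Mathlib

/-!
The orthonormal families of `N` normalized arc indicators and `N` cosines give a contraction of
`L²(𝕋)` whose regular norm is at least of order `√N`: the modulus takes the constant function to
something of size `√N`. Hence there are regular operators `Sₙ` with `‖Sₙ‖ ≤ 2⁻ⁿ` and
`⟪|Sₙ| 1, √2⟫ ≥ 4ⁿ`. Placing `Sₙ` on the `n`-th dyadic interval by a bump function gives a
continuous kernel `k(x, y) = f(x)` with `f(0) = 0`, each value of which is a multiple of a single
`Sₙ`. If `T_k = S₁ - S₂` with `S₁`, `S₂` positive, then testing on functions supported where
`f = Sₙ`, a set of measure comparable to `2⁻ⁿ`, bounds `2⁻ⁿ ⟪|Sₙ| 1, √2⟫` uniformly in `n` by the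
values of `S₁` and `S₂` at the constant function, which is absurd.
-/

open MeasureTheory
open scoped ENNReal RealInnerProductSpace

/-- The real Hilbert lattice `H = L²(𝕋)`, where `𝕋` is the one-dimensional torus,
with its natural (pointwise a.e.) order; it is identified with its dual via the inner
product. -/
noncomputable abbrev TorusL2 : Type :=
  Lp (α := AddCircle (1:ℝ)) ℝ 2 volume

/-- Lebesgue measure on `(0,1)`. -/
noncomputable abbrev iooMeasure : Measure ℝ := volume.restrict (Set.Ioo (0:ℝ) 1)

/-- A positive operator on the Banach lattice `H`. -/
def IsPositiveOperator (A : TorusL2 →L[ℝ] TorusL2) : Prop :=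
  ∀ g : TorusL2, 0 ≤ g → 0 ≤ A g

/-- Weak*-measurability of an `H`-valued function (under the self-duality of `H`). -/
def WeakStarMeasurableH (g : ℝ → TorusL2) : Prop :=
  ∀ v : TorusL2, Measurable fun y => ⟪g y, v⟫

/-- The σ*-norm of an `H`-valued function on `((0,1), dx)`, `H` identified with its
dual: `‖g‖_{σ*} = sup_{‖v‖ ≤ 1} esssup_y |⟪g y, v⟫|`. -/
noncomputable def sigmaStarNormH (g : ℝ → TorusL2) : ℝ≥0∞ :=
  ⨆ v : TorusL2, ⨆ _ : ‖v‖ ≤ 1, essSup (fun y => (‖⟪g y, v⟫‖₊ : ℝ≥0∞)) iooMeasure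

/-- `S` is a choice of representatives of a bounded linear operator
`L¹((0,1); H) → L^∞_{σ*}((0,1); H)`. -/
def IsAbstractOperatorRepH (S : Lp TorusL2 1 iooMeasure → ℝ → TorusL2) : Prop :=
  (∀ f, WeakStarMeasurableH (S f) ∧ sigmaStarNormH (S f) < ⊤) ∧
  (∀ f g, sigmaStarNormH (S (f + g) - S f - S g) = 0) ∧
  (∀ (c : ℝ) (f), sigmaStarNormH (S (c • f) - c • S f) = 0) ∧
  (∃ C : ℝ≥0∞, ∀ f, sigmaStarNormH (S f) ≤ C * (‖f‖₊ : ℝ≥0∞))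

/-- Positivity of such an operator representative: `S f ≥ 0` in `L^∞_{σ*}((0,1); H)`
whenever `f ≥ 0` a.e. -/
def AbstractOperatorRepPositiveH (S : Lp TorusL2 1 iooMeasure → ℝ → TorusL2) : Prop :=
  ∀ f : Lp TorusL2 1 iooMeasure, (∀ᵐ x ∂iooMeasure, 0 ≤ f x) →
    ∀ v : TorusL2, 0 ≤ v → ∀ᵐ y ∂iooMeasure, 0 ≤ ⟪S f y, v⟫

section OrthonormalTransfer

variable (𝕜 : Type*) {E F ι : Type*} [RCLike 𝕜] [NormedAddCommGroup E] [InnerProductSpace 𝕜 E]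
  [NormedAddCommGroup F] [InnerProductSpace 𝕜 F] [Fintype ι]

/-- The finite-rank operator `x ↦ ∑ i, ⟪e i, x⟫ • w i`, which for orthonormal families `e` and `w`
is the partial isometry taking `e i` to `w i`. -/
noncomputable def orthonormalTransfer (e : ι → E) (w : ι → F) : E →L[𝕜] F :=
  ∑ i, InnerProductSpace.rankOne 𝕜 (w i) (e i)

variable {𝕜}

lemma orthonormalTransfer_apply (e : ι → E) (w : ι → F) (x : E) :
    orthonormalTransfer 𝕜 e w x = ∑ i, (inner 𝕜 (e i) x) • w i := by
  simp [orthonormalTransfer]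

lemma orthonormalTransfer_apply_self {e : ι → E} (he : Orthonormal 𝕜 e) (w : ι → F) (i : ι) :
    orthonormalTransfer 𝕜 e w (e i) = w i := by
  classical
  simp [orthonormalTransfer_apply, orthonormal_iff_ite.mp he]

lemma norm_orthonormalTransfer_le_one {e : ι → E} {w : ι → F} (he : Orthonormal 𝕜 e)
    (hw : Orthonormal 𝕜 w) : ‖orthonormalTransfer 𝕜 e w‖ ≤ 1 := by
  refine ContinuousLinearMap.opNorm_le_bound _ zero_le_one fun x => ?_
  rw [one_mul, orthonormalTransfer_apply, ← sq_le_sq₀ (norm_nonneg _) (norm_nonneg _)]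
  calc ‖∑ i, (inner 𝕜 (e i) x) • w i‖ ^ 2 = ∑ i, ‖inner 𝕜 (e i) x‖ ^ 2 := by
        rw [← inner_self_eq_norm_sq (𝕜 := 𝕜), hw.inner_sum, map_sum]
        exact Finset.sum_congr rfl fun i _ => by
          rw [RCLike.conj_mul]
          norm_cast
    _ ≤ ‖x‖ ^ 2 := he.sum_inner_products_le x

end OrthonormalTransfer

section LpOrder

variable {α : Type*} [MeasurableSpace α] {μ : Measure α}

lemma L2_inner_nonneg {f g : Lp ℝ 2 μ} (hf : 0 ≤ f) (hg : 0 ≤ g) : 0 ≤ ⟪f, g⟫ := by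
  rw [L2.inner_def]
  refine integral_nonneg_of_ae ?_
  filter_upwards [(Lp.coeFn_nonneg f).2 hf, (Lp.coeFn_nonneg g).2 hg] with x hfx hgx
  exact mul_nonneg hgx hfx

lemma Lp_smul_nonneg {p : ℝ≥0∞} {c : ℝ} (hc : 0 ≤ c) {f : Lp ℝ p μ} (hf : 0 ≤ f) : 0 ≤ c • f := by
  rw [← Lp.coeFn_nonneg] at hf ⊢
  filter_upwards [hf, Lp.coeFn_smul c f] with x hfx hcf
  rw [hcf]
  exact mul_nonneg hc hfx

end LpOrder

section Indicators

variable {α ι E : Type*} [MeasurableSpace α] {μ : Measure α} [NormedAddCommGroup E]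
  [PartialOrder E]

lemma indicatorConstLp_nonneg {p : ℝ≥0∞} {s : Set α} (hs : MeasurableSet s) (hμs : μ s ≠ ∞)
    {c : E} (hc : 0 ≤ c) : 0 ≤ indicatorConstLp p hs hμs c := by
  rw [← Lp.coeFn_nonneg]
  filter_upwards [indicatorConstLp_coeFn (p := p) (hs := hs) (hμs := hμs) (c := c)] with x hx
  rw [hx]
  exact Set.indicator_nonneg (fun _ _ => hc) x

lemma Lp_const_nonneg [IsFiniteMeasure μ] {p : ℝ≥0∞} {c : E} (hc : 0 ≤ c) :
    0 ≤ Lp.const p μ c := by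
  rw [← Lp.coeFn_nonneg]
  filter_upwards [Lp.coeFn_const p μ c] with x hx
  rw [hx]
  exact hc

lemma sum_indicatorConstLp_le_const [Fintype ι] [IsFiniteMeasure μ] {p : ℝ≥0∞} {s : Set α}
    (hs : MeasurableSet s) {a : ι → E} {c : E} (hc : 0 ≤ c) (hac : ∑ i, a i ≤ c) :
    ∑ i, indicatorConstLp p hs (measure_ne_top μ s) (a i) ≤ Lp.const p μ c := by
  rw [← Lp.coeFn_le]
  have hcoe : ∀ᵐ x ∂μ, ∀ i, indicatorConstLp p hs (measure_ne_top μ s) (a i) x =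
      s.indicator (fun _ => a i) x := ae_all_iff.2 fun _ => indicatorConstLp_coeFn
  filter_upwards [Lp.coeFn_finsetSum Finset.univ
    fun i => indicatorConstLp p hs (measure_ne_top μ s) (a i), hcoe, Lp.coeFn_const p μ c]
    with x hsum hx hconst
  rw [hsum, hconst, Finset.sum_apply, Finset.sum_congr rfl fun i _ => hx i]
  by_cases hxs : x ∈ s <;> simp [hxs, hc, hac]

variable {s : ι → Set α}

lemma sum_indicatorConstLp_one_le_of_disjoint [Fintype ι] [IsFiniteMeasure μ] {p : ℝ≥0∞}
    (hs : ∀ i, MeasurableSet (s i)) (hdisj : Pairwise (Function.onFun Disjoint s)) :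
    ∑ i, indicatorConstLp p (hs i) (measure_ne_top μ _) (1 : ℝ) ≤ Lp.const p μ 1 := by
  rw [← Lp.coeFn_le]
  have hcoe : ∀ᵐ x ∂μ, ∀ i, indicatorConstLp p (hs i) (measure_ne_top μ _) (1 : ℝ) x =
      (s i).indicator (fun _ => 1) x := ae_all_iff.2 fun _ => indicatorConstLp_coeFn
  filter_upwards [Lp.coeFn_finsetSum Finset.univ
    fun i => indicatorConstLp p (hs i) (measure_ne_top μ _) (1 : ℝ), hcoe,
    Lp.coeFn_const p μ (1 : ℝ)] with x hsum hx hconst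
  rw [hsum, hconst, Finset.sum_apply, Finset.sum_congr rfl fun i _ => hx i,
    ← Finset.indicator_biUnion_apply _ _ fun i _ j _ hij => hdisj hij]
  exact Set.indicator_le_self' (fun _ _ => zero_le_one) x

lemma orthonormal_normalized_indicatorConstLp (hs : ∀ i, MeasurableSet (s i))
    (hμs : ∀ i, μ (s i) ≠ ∞) (hdisj : Pairwise (Function.onFun Disjoint s))
    (hpos : ∀ i, μ (s i) ≠ 0) :
    Orthonormal ℝ fun i =>
      (√(μ.real (s i)))⁻¹ • indicatorConstLp 2 (hs i) (hμs i) (1 : ℝ) := by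
  classical
  rw [orthonormal_iff_ite]
  intro i j
  rw [real_inner_smul_left, real_inner_smul_right,
    L2.real_inner_indicatorConstLp_one_indicatorConstLp_one (hs i) (hs j) (hμs i) (hμs j)]
  split_ifs with hij
  · subst hij
    have : 0 < μ.real (s i) := ENNReal.toReal_pos (hpos i) (hμs i)
    rw [Set.inter_self, ← mul_assoc, ← mul_inv, Real.mul_self_sqrt this.le,
      inv_mul_cancel₀ this.ne']
  · simp [(hdisj hij).inter_eq]

end Indicators

section Cosines

/-- The `n`-th real cosine mode `z ↦ √2 cos (2πnz)` on the unit circle, normalized in `L²`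
for `n ≠ 0`. -/
noncomputable def cosMode (n : ℤ) : C(UnitAddCircle, ℝ) where
  toFun z := √2 * (fourier n z : ℂ).re

lemma cosMode_apply (n : ℤ) (z : UnitAddCircle) : cosMode n z = √2 * (fourier n z : ℂ).re := rfl

lemma abs_cosMode_le (n : ℤ) (z : UnitAddCircle) : |cosMode n z| ≤ √2 := by
  rw [cosMode_apply, abs_mul, abs_of_nonneg (Real.sqrt_nonneg 2)]
  refine mul_le_of_le_one_right (Real.sqrt_nonneg 2) ((Complex.abs_re_le_norm _).trans ?_)
  rw [fourier_apply, Circle.norm_coe]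

lemma integral_re_fourier_eq_zero {n : ℤ} (hn : n ≠ 0) :
    ∫ z : UnitAddCircle, (fourier n z : ℂ).re = 0 :=
  integral_eq_zero_of_add_right_eq_neg (g := ((1 / 2 / n : ℝ) : UnitAddCircle)) fun z => by
    rw [fourier_add_half_inv_index hn one_pos, Complex.neg_re]

lemma cosMode_mul_cosMode (m n : ℤ) (z : UnitAddCircle) :
    cosMode m z * cosMode n z = (fourier (m + n) z : ℂ).re + (fourier (m - n) z : ℂ).re := by
  simp only [cosMode_apply, sub_eq_add_neg, fourier_add, fourier_neg, Complex.mul_re,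
    Complex.conj_re, Complex.conj_im]
  linear_combination (fourier m z : ℂ).re * (fourier n z : ℂ).re *
    Real.mul_self_sqrt (zero_le_two : (0 : ℝ) ≤ 2)

lemma integral_cosMode_mul_cosMode {m n : ℤ} (hm : 0 < m) (hn : 0 < n) :
    ∫ z, cosMode m z * cosMode n z = if m = n then 1 else 0 := by
  have hint (k : ℤ) : Integrable (fun z : UnitAddCircle => (fourier k z : ℂ).re) :=
    (Complex.continuous_re.comp (fourier k).continuous).integrable_of_hasCompactSupport
      (HasCompactSupport.of_compactSpace _)
  simp only [cosMode_mul_cosMode]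
  rw [integral_add (hint _) (hint _), integral_re_fourier_eq_zero (by omega), zero_add]
  split_ifs with hmn
  · simp [hmn, Measure.real]
  · exact integral_re_fourier_eq_zero (sub_ne_zero.2 hmn)

/-- The cosine of frequency `n + 1` as a vector of `L²(𝕋)`; the shift leaves out the constant
mode. -/
noncomputable def cosVector (n : ℕ) : TorusL2 :=
  ContinuousMap.toLp 2 volume ℝ (cosMode (n + 1))

lemma orthonormal_cosVector : Orthonormal ℝ cosVector := by
  rw [orthonormal_iff_ite]
  intro m n
  rw [cosVector, cosVector, ContinuousMap.inner_toLp]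
  simp only [conj_trivial]
  rw [integral_cosMode_mul_cosMode (by positivity) (by positivity)]
  simp [eq_comm]

lemma abs_cosVector_le (n : ℕ) : |cosVector n| ≤ Lp.const 2 volume (√2) := by
  rw [← Lp.coeFn_le]
  filter_upwards [Lp.coeFn_abs (cosVector n), Lp.coeFn_const 2 volume (√2),
    ContinuousMap.coeFn_toLp (p := 2) (𝕜 := ℝ) volume (cosMode (n + 1))] with z habs hconst hz
  rw [habs, hconst, cosVector, hz]
  exact abs_cosMode_le _ z

end Cosines

section Arcs

/-- The arc of the unit circle consisting of the classes of the points of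
`(i / N, (i + 1) / N]`, provided `i < N`. -/
def circleArc (N i : ℕ) : Set UnitAddCircle :=
  (fun z => (AddCircle.measurableEquivIoc 1 0 z : ℝ)) ⁻¹' Set.Ioc (i / N) ((i + 1 : ℕ) / N)

lemma measurableSet_circleArc (N i : ℕ) : MeasurableSet (circleArc N i) :=
  (measurable_subtype_coe.comp (AddCircle.measurableEquivIoc 1 0).measurable) measurableSet_Ioc

lemma pairwise_disjoint_circleArc (N : ℕ) : Pairwise (Function.onFun Disjoint (circleArc N)) := by
  have hmono : Monotone fun i : ℕ => (i / N : ℝ) := fun i j hij => by dsimp only; gcongr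
  exact fun i j hij => (hmono.pairwise_disjoint_on_Ioc_succ hij).preimage _

lemma volume_circleArc {N i : ℕ} (hi : i < N) : volume (circleArc N i) = (N : ℝ≥0∞)⁻¹ := by
  have hcoe : MeasurePreserving (fun z : UnitAddCircle => (AddCircle.measurableEquivIoc 1 0 z : ℝ))
      volume (volume.restrict (Set.Ioc 0 (0 + 1))) :=
    (measurePreserving_subtype_coe measurableSet_Ioc).comp
      (AddCircle.measurePreserving_equivIoc (T := 1) (a := 0))
  have hN : (0 : ℝ) < N := by exact_mod_cast (Nat.zero_le i).trans_lt hi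
  have hsub : Set.Ioc (i / N : ℝ) ((i + 1 : ℕ) / N) ⊆ Set.Ioc 0 (0 + 1) := by
    refine Set.Ioc_subset_Ioc (by positivity) ?_
    rw [zero_add, div_le_one hN]
    exact_mod_cast hi
  rw [circleArc, hcoe.measure_preimage measurableSet_Ioc.nullMeasurableSet,
    Measure.restrict_apply measurableSet_Ioc, Set.inter_eq_left.2 hsub, Real.volume_Ioc, ← sub_div,
    Nat.cast_add_one, add_sub_cancel_left, one_div, ENNReal.ofReal_inv_of_pos hN,
    ENNReal.ofReal_natCast]

/-- The indicator function of `circleArc N i` as a vector of `L²(𝕋)`. -/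
noncomputable def arcIndicator (N : ℕ) (i : Fin N) : TorusL2 :=
  indicatorConstLp 2 (measurableSet_circleArc N i) (measure_ne_top volume _) (1 : ℝ)

lemma arcIndicator_nonneg (N : ℕ) (i : Fin N) : 0 ≤ arcIndicator N i :=
  indicatorConstLp_nonneg _ _ zero_le_one

lemma sum_arcIndicator_le_one (N : ℕ) : ∑ i, arcIndicator N i ≤ Lp.const 2 volume 1 :=
  sum_indicatorConstLp_one_le_of_disjoint (fun i : Fin N => measurableSet_circleArc N i)
    ((pairwise_disjoint_circleArc N).comp_of_injective Fin.val_injective)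

lemma orthonormal_sqrt_smul_arcIndicator (N : ℕ) :
    Orthonormal ℝ fun i : Fin N => √N • arcIndicator N i := by
  convert orthonormal_normalized_indicatorConstLp
    (fun i : Fin N => measurableSet_circleArc N i) (fun _ => measure_ne_top volume _)
    ((pairwise_disjoint_circleArc N).comp_of_injective Fin.val_injective)
    (fun i => by simp [volume_circleArc i.isLt]) using 3 with i
  · simp [Measure.real, volume_circleArc i.isLt]
  · rfl

end Arcs

section RegularOperators

/-- A difference of two positive operators on `L²(𝕋)`. -/
def IsRegularOperator (A : TorusL2 →L[ℝ] TorusL2) : Prop :=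
  ∃ P Q : TorusL2 →L[ℝ] TorusL2, IsPositiveOperator P ∧ IsPositiveOperator Q ∧ A = P - Q

lemma isRegularOperator_zero : IsRegularOperator 0 :=
  ⟨0, 0, fun _ _ => le_rfl, fun _ _ => le_rfl, (sub_zero 0).symm⟩

lemma IsRegularOperator.add {A B : TorusL2 →L[ℝ] TorusL2} (hA : IsRegularOperator A)
    (hB : IsRegularOperator B) : IsRegularOperator (A + B) := by
  obtain ⟨P, Q, hP, hQ, rfl⟩ := hA
  obtain ⟨P', Q', hP', hQ', rfl⟩ := hB
  exact ⟨P + P', Q + Q', fun g hg => add_nonneg (hP g hg) (hP' g hg),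
    fun g hg => add_nonneg (hQ g hg) (hQ' g hg), sub_add_sub_comm P Q P' Q'⟩

lemma IsRegularOperator.smul {A : TorusL2 →L[ℝ] TorusL2} (hA : IsRegularOperator A) {c : ℝ}
    (hc : 0 ≤ c) : IsRegularOperator (c • A) := by
  obtain ⟨P, Q, hP, hQ, rfl⟩ := hA
  exact ⟨c • P, c • Q, fun g hg => Lp_smul_nonneg hc (hP g hg),
    fun g hg => Lp_smul_nonneg hc (hQ g hg), smul_sub c P Q⟩

lemma isRegularOperator_rankOne {e : TorusL2} (he : 0 ≤ e) (w : TorusL2) :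
    IsRegularOperator (InnerProductSpace.rankOne ℝ w e) := by
  have hpos {v : TorusL2} (hv : 0 ≤ v) : IsPositiveOperator (InnerProductSpace.rankOne ℝ v e) :=
    fun g hg => Lp_smul_nonneg (L2_inner_nonneg he hg) hv
  refine ⟨_, _, hpos (posPart_nonneg w), hpos (negPart_nonneg w), ?_⟩
  rw [← sub_apply, ← map_sub, posPart_sub_negPart]

lemma isRegularOperator_orthonormalTransfer {ι : Type*} [Fintype ι] {e : ι → TorusL2}
    (he : ∀ i, 0 ≤ e i) (w : ι → TorusL2) : IsRegularOperator (orthonormalTransfer ℝ e w) :=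
  Finset.sum_induction _ _ (fun _ _ => IsRegularOperator.add) isRegularOperator_zero
    fun i _ => isRegularOperator_rankOne (he i) (w i)

/-- The sums `∑ i, ⟪A (a i), w i⟫` over finite families with `0 ≤ a i`, `∑ i, a i ≤ u` and
`|w i| ≤ v`. By the Riesz–Kantorovich formula their supremum is `⟪|A| u, v⟫` for regular `A`, so
they measure the regular norm without reference to the modulus. -/
def kantorovichSums (A : TorusL2 →L[ℝ] TorusL2) (u v : TorusL2) : Set ℝ :=
  {r | ∃ (n : ℕ) (a w : Fin n → TorusL2), (∀ i, 0 ≤ a i) ∧ ∑ i, a i ≤ u ∧ (∀ i, |w i| ≤ v) ∧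
    r = ∑ i, ⟪A (a i), w i⟫}

lemma mul_mem_kantorovichSums_smul {A : TorusL2 →L[ℝ] TorusL2} {u v : TorusL2} {r : ℝ}
    (hr : r ∈ kantorovichSums A u v) (c : ℝ) : c * r ∈ kantorovichSums (c • A) u v := by
  obtain ⟨n, a, w, ha, hau, hwv, rfl⟩ := hr
  refine ⟨n, a, w, ha, hau, hwv, ?_⟩
  simp [Finset.mul_sum, real_inner_smul_left]

/-- The contraction of `L²(𝕋)` taking the normalized indicators of `N` equal arcs to `N`
cosines. -/
noncomputable def arcsToCosines (N : ℕ) : TorusL2 →L[ℝ] TorusL2 :=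
  orthonormalTransfer ℝ (fun i : Fin N => √N • arcIndicator N i) fun i => cosVector i

lemma norm_arcsToCosines_le_one (N : ℕ) : ‖arcsToCosines N‖ ≤ 1 :=
  norm_orthonormalTransfer_le_one (orthonormal_sqrt_smul_arcIndicator N)
    (orthonormal_cosVector.comp _ Fin.val_injective)

lemma isRegularOperator_arcsToCosines (N : ℕ) : IsRegularOperator (arcsToCosines N) :=
  isRegularOperator_orthonormalTransfer
    (fun i => Lp_smul_nonneg (Real.sqrt_nonneg N) (arcIndicator_nonneg N i)) _

lemma inner_arcsToCosines_arcIndicator (N : ℕ) (i : Fin N) :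
    ⟪arcsToCosines N (arcIndicator N i), cosVector i⟫ = (√N)⁻¹ := by
  have hN : √(N : ℝ) ≠ 0 := Real.sqrt_ne_zero'.2 (by exact_mod_cast i.pos)
  have happly : √(N : ℝ) • arcsToCosines N (arcIndicator N i) = cosVector i := by
    rw [← map_smul]
    exact orthonormalTransfer_apply_self (orthonormal_sqrt_smul_arcIndicator N) _ i
  rw [(eq_inv_smul_iff₀ hN).2 happly, real_inner_smul_left, real_inner_self_eq_norm_sq,
    orthonormal_cosVector.1, one_pow, mul_one]

lemma sqrt_mem_kantorovichSums_arcsToCosines (N : ℕ) :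
    √N ∈ kantorovichSums (arcsToCosines N) (Lp.const 2 volume 1) (Lp.const 2 volume (√2)) := by
  refine ⟨N, arcIndicator N, fun i => cosVector i, arcIndicator_nonneg N,
    sum_arcIndicator_le_one N, fun i => abs_cosVector_le i, ?_⟩
  simp [inner_arcsToCosines_arcIndicator, ← div_eq_mul_inv, Real.div_sqrt]

lemma exists_isRegularOperator_norm_le_and_kantorovichSums_ge {ε : ℝ} (hε : 0 < ε) (C : ℝ) :
    ∃ A : TorusL2 →L[ℝ] TorusL2, IsRegularOperator A ∧ ‖A‖ ≤ ε ∧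
      ∃ r ∈ kantorovichSums A (Lp.const 2 volume 1) (Lp.const 2 volume (√2)), C ≤ r := by
  obtain ⟨N, hN⟩ : ∃ N : ℕ, C / ε ≤ √N :=
    ((Real.tendsto_sqrt_atTop.comp tendsto_natCast_atTop_atTop).eventually_ge_atTop _).exists
  refine ⟨ε • arcsToCosines N, (isRegularOperator_arcsToCosines N).smul hε.le, ?_,
    _, mul_mem_kantorovichSums_smul (sqrt_mem_kantorovichSums_arcsToCosines N) ε, ?_⟩
  · rw [norm_smul, Real.norm_of_nonneg hε.le]
    exact mul_le_of_le_one_right hε.le (norm_arcsToCosines_le_one N)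
  · rwa [div_le_iff₀' hε] at hN

end RegularOperators

section DyadicBumps

/-- A smooth bump supported in `[2⁻ⁿ⁻¹, 2⁻ⁿ]` and equal to `1` on the middle half of that
interval. -/
noncomputable def dyadicBump (n : ℕ) : ContDiffBump (3 * (1 / 2 : ℝ) ^ (n + 2)) where
  rIn := (1 / 2) ^ (n + 3)
  rOut := (1 / 2) ^ (n + 2)
  rIn_pos := by positivity
  rIn_lt_rOut := pow_lt_pow_right_of_lt_one₀ (by norm_num) (by norm_num) (by omega)

lemma support_dyadicBump (n : ℕ) :
    Function.support (dyadicBump n) = Set.Ioo ((1 / 2 : ℝ) ^ (n + 1)) ((1 / 2) ^ n) := by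
  rw [ContDiffBump.support_eq, Real.ball_eq_Ioo]
  simp only [dyadicBump]
  congr 1 <;> ring

lemma pairwise_disjoint_support_dyadicBump :
    Pairwise (Function.onFun Disjoint fun n => Function.support (dyadicBump n)) := by
  have hanti : Antitone fun n : ℕ => (1 / 2 : ℝ) ^ n :=
    pow_right_anti₀ (by norm_num) (by norm_num)
  simpa only [support_dyadicBump] using! hanti.pairwise_disjoint_on_Ioo_succ

/-- The set on which `dyadicBump n` equals `1` by construction. -/
def dyadicPlateau (n : ℕ) : Set ℝ :=
  Metric.closedBall (3 * (1 / 2) ^ (n + 2)) ((1 / 2) ^ (n + 3))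

lemma measurableSet_dyadicPlateau (n : ℕ) : MeasurableSet (dyadicPlateau n) :=
  Metric.isClosed_closedBall.measurableSet

lemma dyadicBump_eq_one {n : ℕ} {x : ℝ} (hx : x ∈ dyadicPlateau n) : dyadicBump n x = 1 :=
  (dyadicBump n).one_of_mem_closedBall hx

lemma dyadicPlateau_subset_Ioo (n : ℕ) : dyadicPlateau n ⊆ Set.Ioo 0 1 := fun x hx => by
  have hsupp : x ∈ Function.support (dyadicBump n) := by simp [dyadicBump_eq_one hx]
  rw [support_dyadicBump] at hsupp
  exact ⟨lt_trans (by positivity) hsupp.1,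
    hsupp.2.trans_le (pow_le_one₀ (by norm_num) (by norm_num))⟩

lemma iooMeasure_real_dyadicPlateau (n : ℕ) :
    iooMeasure.real (dyadicPlateau n) = (1 / 2) ^ (n + 2) := by
  rw [measureReal_restrict_apply (measurableSet_dyadicPlateau n),
    Set.inter_eq_left.2 (dyadicPlateau_subset_Ioo n), dyadicPlateau,
    Real.volume_real_closedBall (by positivity)]
  ring

variable {E : Type*} [NormedAddCommGroup E] [NormedSpace ℝ E]

/-- The function `∑ n, φₙ(x) • S n`, where `φₙ` is the bump on the `n`-th dyadic interval. At every
point at most one term is nonzero. -/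
noncomputable def dyadicBumpSeries (S : ℕ → E) (x : ℝ) : E := ∑' n, dyadicBump n x • S n

lemma dyadicBumpSeries_eq_smul (S : ℕ → E) {n : ℕ} {x : ℝ} (hx : dyadicBump n x ≠ 0) :
    dyadicBumpSeries S x = dyadicBump n x • S n := by
  refine tsum_eq_single n fun m hmn => ?_
  have hxm := Set.disjoint_right.1 (pairwise_disjoint_support_dyadicBump hmn) hx
  rw [Function.notMem_support.1 hxm, zero_smul]

lemma dyadicBumpSeries_eq_on_plateau (S : ℕ → E) {n : ℕ} {x : ℝ} (hx : x ∈ dyadicPlateau n) :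
    dyadicBumpSeries S x = S n := by
  have h1 := dyadicBump_eq_one hx
  rw [dyadicBumpSeries_eq_smul S (by rw [h1]; exact one_ne_zero), h1, one_smul]

lemma dyadicBumpSeries_eq_zero_or_smul (S : ℕ → E) (x : ℝ) :
    dyadicBumpSeries S x = 0 ∨ ∃ n, ∃ c : ℝ, 0 ≤ c ∧ dyadicBumpSeries S x = c • S n := by
  by_cases hx : ∃ n, dyadicBump n x ≠ 0
  · obtain ⟨n, hn⟩ := hx
    exact .inr ⟨n, _, (dyadicBump n).nonneg, dyadicBumpSeries_eq_smul S hn⟩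
  · push Not at hx
    exact .inl (by simp [dyadicBumpSeries, hx])

lemma continuous_dyadicBumpSeries [CompleteSpace E] {S : ℕ → E} (hS : Summable fun n => ‖S n‖) :
    Continuous (dyadicBumpSeries S) := by
  refine continuous_tsum (fun n => (dyadicBump n).continuous.smul continuous_const) hS
    fun n x => ?_
  rw [norm_smul, Real.norm_of_nonneg (dyadicBump n).nonneg]
  exact mul_le_of_le_one_left (norm_nonneg _) (dyadicBump n).le_one

end DyadicBumps

section OperatorRepresentatives

lemma ae_enorm_inner_le_sigmaStarNormH (g : ℝ → TorusL2) (v : TorusL2) :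
    ∀ᵐ y ∂iooMeasure, ‖⟪g y, v⟫‖ₑ ≤ sigmaStarNormH g * ‖v‖ₑ := by
  rcases eq_or_ne v 0 with rfl | hv
  · simp
  have hunit : ‖‖v‖⁻¹ • v‖ ≤ 1 := (norm_smul_inv_norm hv).le
  filter_upwards [ENNReal.ae_le_essSup fun y => (‖⟪g y, ‖v‖⁻¹ • v⟫‖₊ : ℝ≥0∞)] with y hy
  calc ‖⟪g y, v⟫‖ₑ = ‖⟪g y, ‖v‖⁻¹ • v⟫‖ₑ * ‖v‖ₑ := by
        rw [← enorm_norm v, ← enorm_mul, real_inner_smul_right, mul_right_comm,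
          inv_mul_cancel₀ (norm_ne_zero_iff.2 hv), one_mul]
    _ ≤ sigmaStarNormH g * ‖v‖ₑ := by
        gcongr
        exact hy.trans (le_iSup₂_of_le _ hunit le_rfl)

lemma ae_inner_le_of_sigmaStarNormH_lt_top {g : ℝ → TorusL2} (hg : sigmaStarNormH g < ⊤)
    (v : TorusL2) : ∃ M : ℝ, ∀ᵐ y ∂iooMeasure, ⟪g y, v⟫ ≤ M := by
  refine ⟨(sigmaStarNormH g * ‖v‖ₑ).toReal, ?_⟩
  filter_upwards [ae_enorm_inner_le_sigmaStarNormH g v] with y hy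
  refine (le_abs_self _).trans ?_
  rw [← Real.norm_eq_abs, ← toReal_enorm]
  exact ENNReal.toReal_mono (ENNReal.mul_ne_top hg.ne enorm_ne_top) hy

variable {S : Lp TorusL2 1 iooMeasure → ℝ → TorusL2}

lemma IsAbstractOperatorRepH.ae_inner_add (hS : IsAbstractOperatorRepH S)
    (F G : Lp TorusL2 1 iooMeasure) (v : TorusL2) :
    ∀ᵐ y ∂iooMeasure, ⟪S (F + G) y, v⟫ = ⟪S F y, v⟫ + ⟪S G y, v⟫ := by
  filter_upwards [ae_enorm_inner_le_sigmaStarNormH (S (F + G) - S F - S G) v] with y hy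
  rw [hS.2.1, zero_mul, nonpos_iff_eq_zero, enorm_eq_zero, Pi.sub_apply, Pi.sub_apply,
    inner_sub_left, inner_sub_left] at hy
  linarith

lemma IsAbstractOperatorRepH.ae_inner_sum {ι : Type*} (hS : IsAbstractOperatorRepH S)
    (t : Finset ι) (F : ι → Lp TorusL2 1 iooMeasure) (v : TorusL2) :
    ∀ᵐ y ∂iooMeasure, ⟪S (∑ i ∈ t, F i) y, v⟫ = ∑ i ∈ t, ⟪S (F i) y, v⟫ := by
  classical
  induction t using Finset.induction_on with
  | empty =>
    filter_upwards [hS.ae_inner_add 0 0 v] with y hy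
    simpa using hy
  | insert i t hi ih =>
    filter_upwards [ih, hS.ae_inner_add (F i) (∑ j ∈ t, F j) v] with y hsum hadd
    rw [Finset.sum_insert hi, Finset.sum_insert hi, hadd, hsum]

lemma AbstractOperatorRepPositiveH.ae_inner_nonneg (hP : AbstractOperatorRepPositiveH S)
    {F : Lp TorusL2 1 iooMeasure} (hF : 0 ≤ F) {v : TorusL2} (hv : 0 ≤ v) :
    ∀ᵐ y ∂iooMeasure, 0 ≤ ⟪S F y, v⟫ :=
  hP F ((Lp.coeFn_nonneg F).2 hF) v hv

lemma AbstractOperatorRepPositiveH.ae_inner_mono (hP : AbstractOperatorRepPositiveH S)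
    (hS : IsAbstractOperatorRepH S) {F G : Lp TorusL2 1 iooMeasure} (hFG : F ≤ G) {v : TorusL2}
    (hv : 0 ≤ v) : ∀ᵐ y ∂iooMeasure, ⟪S F y, v⟫ ≤ ⟪S G y, v⟫ := by
  filter_upwards [hP.ae_inner_nonneg (sub_nonneg.2 hFG) hv, hS.ae_inner_add F (G - F) v]
    with y hdiff hadd
  rw [add_sub_cancel] at hadd
  linarith

lemma AbstractOperatorRepPositiveH.ae_abs_inner_le (hP : AbstractOperatorRepPositiveH S)
    {F : Lp TorusL2 1 iooMeasure} (hF : 0 ≤ F) {w v : TorusL2} (hwv : |w| ≤ v) :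
    ∀ᵐ y ∂iooMeasure, |⟪S F y, w⟫| ≤ ⟪S F y, v⟫ := by
  filter_upwards [hP.ae_inner_nonneg hF (sub_nonneg.2 ((neg_le_abs w).trans hwv)),
    hP.ae_inner_nonneg hF (sub_nonneg.2 ((le_abs_self w).trans hwv))] with y hneg hpos
  rw [inner_sub_right] at hneg hpos
  rw [inner_neg_right] at hneg
  exact abs_le.2 ⟨by linarith, by linarith⟩

lemma AbstractOperatorRepPositiveH.ae_sum_abs_inner_le {ι : Type*} [Fintype ι]
    (hP : AbstractOperatorRepPositiveH S) (hS : IsAbstractOperatorRepH S)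
    {F : ι → Lp TorusL2 1 iooMeasure} {G : Lp TorusL2 1 iooMeasure} (hF : ∀ i, 0 ≤ F i)
    (hFG : ∑ i, F i ≤ G) {w : ι → TorusL2} {v : TorusL2} (hv : 0 ≤ v) (hwv : ∀ i, |w i| ≤ v) :
    ∀ᵐ y ∂iooMeasure, ∑ i, |⟪S (F i) y, w i⟫| ≤ ⟪S G y, v⟫ := by
  have habs : ∀ᵐ y ∂iooMeasure, ∀ i, |⟪S (F i) y, w i⟫| ≤ ⟪S (F i) y, v⟫ :=
    ae_all_iff.2 fun i => hP.ae_abs_inner_le (hF i) (hwv i)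
  filter_upwards [habs, hS.ae_inner_sum Finset.univ F v, hP.ae_inner_mono hS hFG hv]
    with y hy hsum hmono
  calc ∑ i, |⟪S (F i) y, w i⟫| ≤ ∑ i, ⟪S (F i) y, v⟫ := Finset.sum_le_sum fun i _ => hy i
    _ = ⟪S (∑ i, F i) y, v⟫ := hsum.symm
    _ ≤ ⟪S G y, v⟫ := hmono

end OperatorRepresentatives

section RegularKernelOperators

/-- The kernel operator `T_k : L¹((0,1); H) → L^∞_{σ*}((0,1); H)` is a difference of two positive
operators, given here by representatives `S₁` and `S₂`. -/
def HasRegularKernelOperator (k : ℝ × ℝ → TorusL2 →L[ℝ] TorusL2) : Prop :=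
  ∃ S₁ S₂ : Lp TorusL2 1 iooMeasure → ℝ → TorusL2,
    IsAbstractOperatorRepH S₁ ∧ IsAbstractOperatorRepH S₂ ∧
    AbstractOperatorRepPositiveH S₁ ∧ AbstractOperatorRepPositiveH S₂ ∧
    ∀ (f : Lp TorusL2 1 iooMeasure) (v : TorusL2),
      (fun y => ∫ x, ⟪k (x, y) (f x), v⟫ ∂iooMeasure)
        =ᵐ[iooMeasure] fun y => ⟪S₁ f y, v⟫ - ⟪S₂ f y, v⟫

lemma integral_inner_kernel_indicatorConstLp {k : ℝ × ℝ → TorusL2 →L[ℝ] TorusL2}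
    {s : Set ℝ} (hs : MeasurableSet s) {A : TorusL2 →L[ℝ] TorusL2} {y : ℝ}
    (hkA : ∀ x ∈ s, k (x, y) = A) (a w : TorusL2) :
    ∫ x, ⟪k (x, y) (indicatorConstLp 1 hs (measure_ne_top iooMeasure s) a x), w⟫ ∂iooMeasure =
      iooMeasure.real s * ⟪A a, w⟫ := by
  rw [← smul_eq_mul, ← integral_indicator_const _ hs]
  refine integral_congr_ae ?_
  filter_upwards [indicatorConstLp_coeFn (p := 1) (hs := hs)
    (hμs := measure_ne_top iooMeasure s) (c := a)] with x hx
  rw [hx]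
  by_cases hxs : x ∈ s <;> simp [hxs, hkA]

/-- Test functions `𝟙_s ⊗ a i` are dominated by `1 ⊗ u`, on which both positive operators take a
fixed value; hence the bound does not depend on `s` and `A`. -/
lemma HasRegularKernelOperator.exists_measureReal_mul_kantorovichSum_le
    {k : ℝ × ℝ → TorusL2 →L[ℝ] TorusL2} (hk : HasRegularKernelOperator k) {u v : TorusL2}
    (hu : 0 ≤ u) (hv : 0 ≤ v) :
    ∃ M : ℝ, ∀ (s : Set ℝ) (A : TorusL2 →L[ℝ] TorusL2), MeasurableSet s →
      (∀ x ∈ s, ∀ y, k (x, y) = A) → ∀ r ∈ kantorovichSums A u v, iooMeasure.real s * r ≤ M := by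
  obtain ⟨S₁, S₂, hS₁, hS₂, hP₁, hP₂, hkS⟩ := hk
  let G : Lp TorusL2 1 iooMeasure := Lp.const 1 iooMeasure u
  obtain ⟨M₁, hM₁⟩ := ae_inner_le_of_sigmaStarNormH_lt_top (hS₁.1 G).2 v
  obtain ⟨M₂, hM₂⟩ := ae_inner_le_of_sigmaStarNormH_lt_top (hS₂.1 G).2 v
  refine ⟨M₁ + M₂, ?_⟩
  rintro s A hs hkA r ⟨n, a, w, ha, hau, hwv, rfl⟩
  let F (i : Fin n) : Lp TorusL2 1 iooMeasure :=
    indicatorConstLp 1 hs (measure_ne_top iooMeasure s) (a i)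
  have hF (i : Fin n) : 0 ≤ F i := indicatorConstLp_nonneg hs _ (ha i)
  have hFG : ∑ i, F i ≤ G := sum_indicatorConstLp_le_const hs hu hau
  have hT : ∀ᵐ y ∂iooMeasure, ∀ i,
      iooMeasure.real s * ⟪A (a i), w i⟫ = ⟪S₁ (F i) y, w i⟫ - ⟪S₂ (F i) y, w i⟫ := by
    refine ae_all_iff.2 fun i => ?_
    filter_upwards [hkS (F i) (w i)] with y hy
    rw [← hy]
    exact (integral_inner_kernel_indicatorConstLp hs (fun x hx => hkA x hx y) (a i) (w i)).symm
  have : NeZero iooMeasure := ⟨by simp [Measure.restrict_eq_zero]⟩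
  obtain ⟨y, hTy, h₁, h₂, hM₁y, hM₂y⟩ :=
    (hT.and <| (hP₁.ae_sum_abs_inner_le hS₁ hF hFG hv hwv).and <|
      (hP₂.ae_sum_abs_inner_le hS₂ hF hFG hv hwv).and <| hM₁.and hM₂).exists
  calc iooMeasure.real s * ∑ i, ⟪A (a i), w i⟫
      = ∑ i, (⟪S₁ (F i) y, w i⟫ - ⟪S₂ (F i) y, w i⟫) := by
        rw [Finset.mul_sum]
        exact Finset.sum_congr rfl fun i _ => hTy i
    _ ≤ ∑ i, (|⟪S₁ (F i) y, w i⟫| + |⟪S₂ (F i) y, w i⟫|) :=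
        Finset.sum_le_sum fun i _ => (le_abs_self _).trans (abs_sub _ _)
    _ ≤ M₁ + M₂ := by
        rw [Finset.sum_add_distrib]
        linarith

lemma not_hasRegularKernelOperator_dyadicBumpSeries {S : ℕ → TorusL2 →L[ℝ] TorusL2}
    {u v : TorusL2} (hu : 0 ≤ u) (hv : 0 ≤ v)
    (hS : ∀ n, ∃ r ∈ kantorovichSums (S n) u v, (4 : ℝ) ^ n ≤ r) :
    ¬ HasRegularKernelOperator fun q => dyadicBumpSeries S q.1 := by
  intro hk
  obtain ⟨M, hM⟩ := hk.exists_measureReal_mul_kantorovichSum_le hu hv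
  obtain ⟨n, hn⟩ := pow_unbounded_of_one_lt (4 * M) (one_lt_two : (1 : ℝ) < 2)
  obtain ⟨r, hr, hnr⟩ := hS n
  have hbound : (1 / 2 : ℝ) ^ (n + 2) * r ≤ M := by
    rw [← iooMeasure_real_dyadicPlateau]
    exact hM _ _ (measurableSet_dyadicPlateau n)
      (fun x hx _ => dyadicBumpSeries_eq_on_plateau S hx) r hr
  have hlower : (2 : ℝ) ^ n / 4 ≤ (1 / 2 : ℝ) ^ (n + 2) * r := by
    calc (2 : ℝ) ^ n / 4 = (1 / 2 : ℝ) ^ (n + 2) * 4 ^ n := by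
          rw [show (4 : ℝ) = 2 * 2 by norm_num, mul_pow, pow_add, one_div, inv_pow]
          field_simp
      _ ≤ (1 / 2 : ℝ) ^ (n + 2) * r := by gcongr
  linarith

end RegularKernelOperators

/-- **A continuous, pointwise regular kernel whose kernel operator is not regular.**
With `H = L²(𝕋)`, there is a continuous `k : [0,1]² → ℒ(H)` whose values are regular
operators (differences of positive operators on `H`), while the associated kernel
operator `T_k : L¹((0,1); H) → L^∞_{σ*}((0,1); H)`, determined by
`⟪(T_k f)(y), v⟫ = ∫₀¹ ⟪k(x,y) f(x), v⟫ dx` for a.e. `y`, is not a difference of two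
positive bounded operators. -/
theorem statement18 :
    ∃ k : ℝ × ℝ → TorusL2 →L[ℝ] TorusL2,
      ContinuousOn k (Set.Icc (0:ℝ) 1 ×ˢ Set.Icc (0:ℝ) 1) ∧
      (∀ q ∈ Set.Icc (0:ℝ) 1 ×ˢ Set.Icc (0:ℝ) 1,
        ∃ P Q : TorusL2 →L[ℝ] TorusL2,
          IsPositiveOperator P ∧ IsPositiveOperator Q ∧ k q = P - Q) ∧
      ¬ (∃ S₁ S₂ : Lp TorusL2 1 iooMeasure → ℝ → TorusL2,
          IsAbstractOperatorRepH S₁ ∧ IsAbstractOperatorRepH S₂ ∧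
          AbstractOperatorRepPositiveH S₁ ∧ AbstractOperatorRepPositiveH S₂ ∧
          ∀ (f : Lp TorusL2 1 iooMeasure) (v : TorusL2),
            (fun y => ∫ x, ⟪k (x, y) (f x), v⟫ ∂iooMeasure)
              =ᵐ[iooMeasure] fun y => ⟪S₁ f y, v⟫ - ⟪S₂ f y, v⟫) := by
  choose S hreg hnorm hlarge using fun n : ℕ =>
    exists_isRegularOperator_norm_le_and_kantorovichSums_ge (by positivity : (0 : ℝ) < (1 / 2) ^ n)
      (4 ^ n)
  have hsum : Summable fun n => ‖S n‖ :=
    summable_geometric_two.of_nonneg_of_le (fun n => norm_nonneg _) hnorm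
  refine ⟨fun q => dyadicBumpSeries S q.1, ?_, fun q _ => ?_, ?_⟩
  · exact ((continuous_dyadicBumpSeries hsum).comp continuous_fst).continuousOn
  · change IsRegularOperator (dyadicBumpSeries S q.1)
    obtain h | ⟨n, c, hc, h⟩ := dyadicBumpSeries_eq_zero_or_smul S q.1 <;> rw [h]
    exacts [isRegularOperator_zero, (hreg n).smul hc]
  · exact not_hasRegularKernelOperator_dyadicBumpSeries (Lp_const_nonneg zero_le_one)
      (Lp_const_nonneg (Real.sqrt_nonneg 2)) hlarge
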